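/- For every integer n ≥ 2, the reduced entropies of the Haros graphs of the rational families 2/(2n+1), 3/(3n+2) and 3/(3n+1) satisfy: H(2/(2n+1)) = (2/(2n+1))·ln 2, H(3/(3n+2)) = (3/(3n+2))·ln 3, and H(3/(3n+1)) = (3/(3n+1))·(ln 3 − (2/3)·ln 2). In particular each family lies on a straight line H(x) = a·x through the origin with slope a equal to ln 2, ln 3, and ln 3 − (2/3)·ln 2 respectively. -/

import Mathlib

/-- Symbols for paths in the Farey binary tree. -/
inductive LR
  | L
  | R
deriving DecidableEq

/-- One step in the Farey binary tree: update the current pair of fractions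
(represented as pairs (numerator, denominator) of naturals). -/
def fareyStep : ((ℕ × ℕ) × (ℕ × ℕ)) → LR → ((ℕ × ℕ) × (ℕ × ℕ))
  | ((a, b), (c, d)), LR.L => ((a, b), (a + c, b + d))
  | ((a, b), (c, d)), LR.R => ((a + c, b + d), (c, d))

/-- The final pair of fractions of a word: after reading the first symbol `L`
the current pair is (0/1, 1/1); the remaining symbols update it. -/
def finalPair (w : List LR) : (ℕ × ℕ) × (ℕ × ℕ) :=
  w.tail.foldl fareyStep ((0, 1), (1, 1))

/-- The value ⟨w⟩ of a word: the mediant of its final pair, as (numerator, denominator). -/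
def value (w : List LR) : ℕ × ℕ :=
  ((finalPair w).1.1 + (finalPair w).2.1, (finalPair w).1.2 + (finalPair w).2.2)

/-- A word over {L,R} is a Farey word when its first symbol is `L`. -/
def IsFareyWord (w : List LR) : Prop := w.head? = some LR.L

/-- Concatenation of degree sequences:
[a₁,…,a_s] ⊕ [b₁,…,b_t] = [a₁+1, a₂, …, a_{s−1}, a_s+b₁, b₂, …, b_{t−1}, b_t+1]. -/
def oplus (A B : List ℕ) : List ℕ :=
  (A.dropLast.modifyHead (· + 1)) ++ [A.getLastD 0 + B.headD 0] ++ B.tail.dropLast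
    ++ [B.getLastD 0 + 1]

/-- Update of the pair (D(left ancestor), D(right ancestor)) of unreduced degree
sequences along one symbol. -/
def degStep : (List ℕ × List ℕ) → LR → (List ℕ × List ℕ)
  | (A, B), LR.L => (A, oplus A B)
  | (A, B), LR.R => (oplus A B, B)

/-- The pair (D(a/b), D(c/d)) of unreduced degree sequences of the final pair of a word;
0/1 and 1/1 are both assigned the list [1,1]. -/
def degPair (w : List LR) : List ℕ × List ℕ :=
  w.tail.foldl degStep ([1, 1], [1, 1])

/-- The unreduced degree sequence D(⟨w⟩) = D(a/b) ⊕ D(c/d) of the value of a word. -/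
def Dseq (w : List LR) : List ℕ :=
  oplus (degPair w).1 (degPair w).2

/-- Reduction: [k₁,…,k_{q+1}] becomes [k₂,…,k_q, k₁+k_{q+1}]; the last entry is the
boundary degree and the remaining ones are the inner degrees. -/
def reduce (D : List ℕ) : List ℕ :=
  D.tail.dropLast ++ [D.headD 0 + D.getLastD 0]

/-- The reduced degree sequence of the Haros graph G_{⟨w⟩}. -/
def degSeq (w : List LR) : List ℕ := reduce (Dseq w)

/-- Degree-distribution entropy S of the Haros graph G_{⟨w⟩}:
S = −Σ_k P(k)·ln P(k), summed over the degree values occurring in the reduced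
degree sequence, where P(k) = m(k)/q. -/
noncomputable def Sent (w : List LR) : ℝ :=
  -∑ k ∈ (degSeq w).toFinset,
    (((degSeq w).count k : ℝ) / ((value w).2 : ℝ)) *
      Real.log (((degSeq w).count k : ℝ) / ((value w).2 : ℝ))

/-- Reduced entropy H of the Haros graph G_{⟨w⟩} (with the convention 0·ln 0 = 0,
automatic since Real.log 0 = 0). -/
noncomputable def Hent (w : List LR) : ℝ :=
  let x : ℝ := ((value w).1 : ℝ) / ((value w).2 : ℝ)
  if x ≤ 1 / 2 then
    Sent w + 2 * x * Real.log x + (1 - 2 * x) * Real.log (1 - 2 * x)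
  else
    Sent w + 2 * (1 - x) * Real.log (1 - x) + (2 * x - 1) * Real.log (2 * x - 1)

/-!
Let `p/q < 1/2`. Below `1/2` the merged entry of `⊕` exceeds `3`, so the twos and threes of the two
sequences simply add up, except that merging with `0/1` creates one more three. Hence the graph of
`p/q` has `p` vertices of degree `2` and `q - 2p` of degree `3`. Subtracting their share of
the entropy is what turns `S` into `H`, and what remains depends only on the multiplicities `m(k)`
of the other `p` degrees: `q H(p/q) = p ln p - ∑ m(k) ln m(k)`, summed over `k ≠ 2, 3`.

The three families are the words `L^n R`, `L^n R L` and `L^n R R`. In the first two the remaining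
degrees are distinct; in the third exactly two of them coincide, which costs `2 ln 2`.
-/

open Real

section CountEntropy

variable {α : Type*} [DecidableEq α]

/-- The entropy, before normalisation by the length, of the multiplicities with which the values
of `l` occur. -/
noncomputable def countEntropy (l : List α) : ℝ :=
  ∑ a ∈ l.toFinset, negMulLog (l.count a)

theorem negMulLog_div (x y : ℝ) : negMulLog (x / y) = (negMulLog x + x * log y) / y := by
  rw [div_eq_mul_inv, negMulLog_mul]
  simp only [negMulLog, log_inv]
  ring

theorem sum_negMulLog_count_div_length (l : List α) :
    ∑ a ∈ l.toFinset, negMulLog ((l.count a : ℝ) / l.length) =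
      log l.length + countEntropy l / l.length := by
  have hcount : ∑ a ∈ l.toFinset, (l.count a : ℝ) = l.length :=
    mod_cast List.sum_toFinset_count_eq_length l
  simp only [negMulLog_div, ← Finset.sum_div, Finset.sum_add_distrib, ← Finset.sum_mul, hcount]
  rw [add_div, mul_div_right_comm, add_comm, countEntropy]
  rcases eq_or_ne (l.length : ℝ) 0 with h | h
  · simp only [h, log_zero, mul_zero]
  · rw [div_self h, one_mul]

theorem countEntropy_eq_add_filter_ne (l : List α) (a : α) :
    countEntropy l = negMulLog (l.count a) + countEntropy (l.filter (· ≠ a)) := by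
  have hfinset : (l.filter (· ≠ a)).toFinset = l.toFinset.erase a := by
    ext b
    simp [and_comm]
  have hcount : ∀ b ∈ l.toFinset.erase a, (l.filter (· ≠ a)).count b = l.count b :=
    fun b hb ↦ List.count_filter (by simpa using Finset.ne_of_mem_erase hb)
  have hsum : countEntropy (l.filter (· ≠ a)) =
      ∑ b ∈ l.toFinset.erase a, negMulLog (l.count b) := by
    rw [countEntropy, hfinset]
    exact Finset.sum_congr rfl fun b hb ↦ by rw [hcount b hb]
  rw [hsum, countEntropy]
  by_cases ha : a ∈ l
  · rw [Finset.add_sum_erase _ (fun b ↦ negMulLog (l.count b)) (List.mem_toFinset.2 ha)]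
  · rw [Finset.erase_eq_of_notMem (by simpa using ha), List.count_eq_zero_of_not_mem ha,
      Nat.cast_zero, negMulLog_zero, zero_add]

theorem countEntropy_eq_zero_of_nodup {l : List α} (hl : l.Nodup) : countEntropy l = 0 :=
  Finset.sum_eq_zero fun a ha ↦ by
    rw [List.count_eq_one_of_mem hl (List.mem_toFinset.1 ha), Nat.cast_one, negMulLog_one]

end CountEntropy

/-- The mediant of a pair of fractions. -/
def mediant (s : (ℕ × ℕ) × (ℕ × ℕ)) : ℕ × ℕ :=
  (s.1.1 + s.2.1, s.1.2 + s.2.2)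

/-- The order of fractions given as (numerator, denominator), by cross-multiplication. -/
def FracLT (f g : ℕ × ℕ) : Prop :=
  f.1 * g.2 < g.1 * f.2

theorem FracLT.irrefl (f : ℕ × ℕ) : ¬FracLT f f :=
  Nat.lt_irrefl _

theorem FracLT.asymm {f g : ℕ × ℕ} (h : FracLT f g) : ¬FracLT g f :=
  Nat.lt_asymm h

theorem FracLT.left_lt_mediant {f g : ℕ × ℕ} (h : FracLT f g) : FracLT f (mediant (f, g)) := by
  unfold FracLT mediant at *
  linarith

theorem FracLT.mediant_lt_right {f g : ℕ × ℕ} (h : FracLT f g) : FracLT (mediant (f, g)) g := by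
  unfold FracLT mediant at *
  linarith

theorem FracLT.step {s : (ℕ × ℕ) × (ℕ × ℕ)} (h : FracLT s.1 s.2) (x : LR) :
    FracLT (fareyStep s x).1 (fareyStep s x).2 := by
  cases x
  · exact h.left_lt_mediant
  · exact h.mediant_lt_right

theorem mediant_foldl_fareyStep_between (u : List LR) {s : (ℕ × ℕ) × (ℕ × ℕ)}
    (h : FracLT s.1 s.2) :
    FracLT s.1 (mediant (u.foldl fareyStep s)) ∧ FracLT (mediant (u.foldl fareyStep s)) s.2 := by
  induction u generalizing s with
  | nil => exact ⟨h.left_lt_mediant, h.mediant_lt_right⟩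
  | cons x u ih =>
    obtain ⟨hleft, hright⟩ := ih (h.step x)
    rw [List.foldl_cons]
    cases x <;> simp only [FracLT, fareyStep] at hleft hright ⊢ <;> constructor <;> linarith

theorem mediant_foldl_cons_L_lt (u : List LR) {s : (ℕ × ℕ) × (ℕ × ℕ)} (h : FracLT s.1 s.2) :
    FracLT (mediant ((LR.L :: u).foldl fareyStep s)) (mediant s) :=
  (mediant_foldl_fareyStep_between u (h.step LR.L)).2

theorem lt_mediant_foldl_cons_R (u : List LR) {s : (ℕ × ℕ) × (ℕ × ℕ)} (h : FracLT s.1 s.2) :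
    FracLT (mediant s) (mediant ((LR.R :: u).foldl fareyStep s)) :=
  (mediant_foldl_fareyStep_between u (h.step LR.R)).1

theorem mediant_foldl_fareyStep_injective {s : (ℕ × ℕ) × (ℕ × ℕ)} (h : FracLT s.1 s.2) :
    Function.Injective fun u : List LR ↦ mediant (u.foldl fareyStep s) := by
  intro u v huv
  dsimp only at huv
  induction u generalizing s v with
  | nil =>
    rcases v with _ | ⟨_ | _, v⟩
    · rfl
    · exact absurd (huv ▸ mediant_foldl_cons_L_lt v h) (FracLT.irrefl _)
    · exact absurd (huv ▸ lt_mediant_foldl_cons_R v h) (FracLT.irrefl _)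
  | cons x u ih =>
    rcases x with _ | _ <;> rcases v with _ | ⟨_ | _, v⟩
    · exact absurd (huv ▸ mediant_foldl_cons_L_lt u h) (FracLT.irrefl _)
    · rw [ih (h.step LR.L) huv]
    · exact absurd (huv ▸ mediant_foldl_cons_L_lt u h) (lt_mediant_foldl_cons_R v h).asymm
    · exact absurd (huv ▸ lt_mediant_foldl_cons_R u h) (FracLT.irrefl _)
    · exact absurd (huv ▸ lt_mediant_foldl_cons_R u h) (mediant_foldl_cons_L_lt v h).asymm
    · rw [ih (h.step LR.R) huv]

theorem IsFareyWord.eq_of_value_eq {w w' : List LR} (hw : IsFareyWord w) (hw' : IsFareyWord w')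
    (h : value w = value w') : w = w' := by
  obtain ⟨u, rfl⟩ := List.head?_eq_some_iff.1 hw
  obtain ⟨u', rfl⟩ := List.head?_eq_some_iff.1 hw'
  have h₀ : FracLT (0, 1) (1, 1) := by simp [FracLT]
  exact congrArg (LR.L :: ·) (mediant_foldl_fareyStep_injective (s := (_, _)) h₀ h)

theorem IsFareyWord.exists_eq_L_L_of_value_lt_half {w : List LR} (hw : IsFareyWord w)
    (h : FracLT (value w) (1, 2)) : ∃ u, w = LR.L :: LR.L :: u := by
  obtain ⟨u, rfl⟩ := List.head?_eq_some_iff.1 hw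
  have h₀ : FracLT (0, 1) (1, 1) := by simp [FracLT]
  rcases u with _ | ⟨_ | _, u⟩
  · exact absurd h (FracLT.irrefl _)
  · exact ⟨u, rfl⟩
  · exact absurd h (lt_mediant_foldl_cons_R (s := (_, _)) u h₀).asymm

theorem dropLast_cons_concat {α : Type*} (a x : α) (l : List α) :
    (a :: (l ++ [x])).dropLast = a :: l :=
  List.dropLast_concat (l₁ := a :: l)

theorem getLastD_cons_concat {α : Type*} (a x d : α) (l : List α) :
    (a :: (l ++ [x])).getLastD d = x :=
  List.getLastD_concat (l := a :: l)

theorem oplus_cons_concat (a x b y : ℕ) (A B : List ℕ) :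
    oplus (a :: (A ++ [x])) (b :: (B ++ [y])) =
      (a + 1) :: ((A ++ (x + b) :: B) ++ [y + 1]) := by
  rw [oplus, dropLast_cons_concat, getLastD_cons_concat, getLastD_cons_concat, List.tail_cons,
    List.dropLast_concat]
  simp

theorem reduce_cons_concat (a x : ℕ) (A : List ℕ) :
    reduce (a :: (A ++ [x])) = A ++ [a + x] := by
  rw [reduce, List.tail_cons, List.dropLast_concat, List.headD_cons, getLastD_cons_concat]

/-- The degree sequence `D` has the low degrees expected of a fraction `f = p/q ≤ 1/2` other than
`0/1`: its `q - 1` inner entries contain `p` twos and `q - 2 * p` threes (stated without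
subtraction). Its ends are at least `2`, so that merging the ends of two such sequences does not
create another `2` or `3`. -/
def HasLowDegreeCounts (D : List ℕ) (f : ℕ × ℕ) : Prop :=
  ∃ a I x, D = a :: (I ++ [x]) ∧ 2 ≤ a ∧ 2 ≤ x ∧
    I.count 2 = f.1 ∧ I.count 3 + 2 * f.1 = f.2 ∧ I.length + 1 = f.2

theorem HasLowDegreeCounts.oplus_mediant {A B : List ℕ} {f g : ℕ × ℕ}
    (hA : HasLowDegreeCounts A f) (hB : HasLowDegreeCounts B g) :
    HasLowDegreeCounts (oplus A B) (mediant (f, g)) := by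
  obtain ⟨a, I, x, rfl, ha, hx, hI₂, hI₃, hI⟩ := hA
  obtain ⟨b, J, y, rfl, hb, hy, hJ₂, hJ₃, hJ⟩ := hB
  have hmerge₂ : x + b ≠ 2 := by omega
  have hmerge₃ : x + b ≠ 3 := by omega
  refine ⟨a + 1, I ++ (x + b) :: J, y + 1, oplus_cons_concat .., by omega, by omega, ?_⟩
  simp only [mediant, List.count_append, List.count_cons_of_ne hmerge₂,
    List.count_cons_of_ne hmerge₃, List.length_append, List.length_cons]
  omega

theorem HasLowDegreeCounts.oplus_foldl {P : List ℕ × List ℕ} {s : (ℕ × ℕ) × (ℕ × ℕ)}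
    (h₁ : HasLowDegreeCounts P.1 s.1) (h₂ : HasLowDegreeCounts P.2 s.2) (u : List LR) :
    HasLowDegreeCounts (oplus (u.foldl degStep P).1 (u.foldl degStep P).2)
      (mediant (u.foldl fareyStep s)) := by
  induction u generalizing P s with
  | nil => exact h₁.oplus_mediant h₂
  | cons x u ih =>
    cases x
    · exact ih h₁ (h₁.oplus_mediant h₂)
    · exact ih (h₁.oplus_mediant h₂) h₂

theorem oplus_one_one (y : ℕ) (I : List ℕ) :
    oplus [1, 1] (2 :: (I ++ [y])) = 2 :: ((3 :: I) ++ [y + 1]) :=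
  oplus_cons_concat 1 1 2 y [] I

-- The sequence `[1, 1]` of `0/1` lacks the expected three; the merged entry `1 + 2` supplies it.
theorem HasLowDegreeCounts.zero_mediant {y : ℕ} {I : List ℕ} {f : ℕ × ℕ}
    (h : HasLowDegreeCounts (2 :: (I ++ [y])) f) :
    HasLowDegreeCounts (2 :: ((3 :: I) ++ [y + 1])) (mediant ((0, 1), f)) := by
  obtain ⟨_, J, z, hJ, -, hy, h₂, h₃, hlen⟩ := h
  obtain ⟨rfl, hz⟩ := List.append_inj' (List.cons.inj hJ).2 rfl
  obtain rfl := List.singleton_inj.1 hz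
  refine ⟨2, 3 :: I, y + 1, rfl, le_rfl, by omega, ?_⟩
  simp only [mediant, List.count_cons_self, List.length_cons,
    List.count_cons_of_ne (show 3 ≠ 2 by decide)]
  omega

theorem HasLowDegreeCounts.oplus_foldl_one_one {y : ℕ} {I : List ℕ} {f : ℕ × ℕ}
    (h : HasLowDegreeCounts (2 :: (I ++ [y])) f) (u : List LR) :
    HasLowDegreeCounts
      (oplus (u.foldl degStep ([1, 1], 2 :: (I ++ [y]))).1
        (u.foldl degStep ([1, 1], 2 :: (I ++ [y]))).2)
      (mediant (u.foldl fareyStep ((0, 1), f))) := by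
  induction u generalizing y I f with
  | nil => simpa only [List.foldl_nil, oplus_one_one] using h.zero_mediant
  | cons x u ih =>
    cases x <;> simp only [List.foldl_cons, degStep, oplus_one_one]
    · exact ih h.zero_mediant
    · exact h.zero_mediant.oplus_foldl h u

theorem IsFareyWord.hasLowDegreeCounts_Dseq {w : List LR} (hw : IsFareyWord w)
    (h : FracLT (value w) (1, 2)) : HasLowDegreeCounts (Dseq w) (value w) := by
  obtain ⟨u, rfl⟩ := hw.exists_eq_L_L_of_value_lt_half h
  have hhalf : HasLowDegreeCounts (2 :: ([2] ++ [2])) (1, 2) :=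
    ⟨2, [2], 2, rfl, le_rfl, le_rfl, rfl, rfl, rfl⟩
  exact hhalf.oplus_foldl_one_one u

theorem HasLowDegreeCounts.count_reduce {D : List ℕ} {f : ℕ × ℕ} (h : HasLowDegreeCounts D f) :
    (reduce D).count 2 = f.1 ∧ (reduce D).count 3 + 2 * f.1 = f.2 ∧ (reduce D).length = f.2 := by
  obtain ⟨a, I, x, rfl, ha, hx, h₂, h₃, hlen⟩ := h
  have hbdry₂ : a + x ≠ 2 := by omega
  have hbdry₃ : a + x ≠ 3 := by omega
  simp [reduce_cons_concat, hbdry₂, hbdry₃, h₂, h₃, hlen]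

/-- The degrees of the Haros graph of `w` other than `2` and `3`, the only ones whose distribution
contributes to the reduced entropy. -/
def hubDegrees (w : List LR) : List ℕ :=
  ((degSeq w).filter (· ≠ 2)).filter (· ≠ 3)

theorem Sent_eq_log_add_countEntropy {w : List LR} (hlen : (degSeq w).length = (value w).2) :
    Sent w = log (value w).2 + countEntropy (degSeq w) / (value w).2 := by
  rw [← hlen, ← sum_negMulLog_count_div_length, Sent, ← hlen, ← Finset.sum_neg_distrib]
  simp only [negMulLog_def, neg_mul]

theorem countEntropy_degSeq (w : List LR) :
    countEntropy (degSeq w) = negMulLog ((degSeq w).count 2) + negMulLog ((degSeq w).count 3)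
      + countEntropy (hubDegrees w) := by
  rw [countEntropy_eq_add_filter_ne _ 2, countEntropy_eq_add_filter_ne _ 3,
    List.count_filter (by decide), ← add_assoc, hubDegrees]

theorem Hent_eq_Sent_sub {w : List LR} {p q : ℕ} (hv : value w = (p, q)) (hq₀ : 0 < q)
    (hq : 2 * p ≤ q) :
    Hent w = Sent w - 2 * negMulLog (p / q) - negMulLog ((q - 2 * p : ℝ) / q) := by
  have hx : (p : ℝ) / q ≤ 1 / 2 := by
    have : (2 * p : ℝ) ≤ q := mod_cast hq
    exact div_le_of_le_mul₀ q.cast_nonneg (by norm_num) (by linarith)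
  have hy : 1 - 2 * ((p : ℝ) / q) = (q - 2 * p) / q := by
    field_simp
  simp only [Hent, hv]
  rw [if_pos hx, hy, negMulLog, negMulLog]
  ring

theorem Hent_of_value_lt_half {w : List LR} (hw : IsFareyWord w) {p q : ℕ}
    (hv : value w = (p, q)) (hpq : 2 * p < q) :
    Hent w = (p * log p + countEntropy (hubDegrees w)) / q := by
  have hq₀ : 0 < q := by omega
  obtain ⟨h₂, h₃, hlen⟩ :=
    (hw.hasLowDegreeCounts_Dseq (by rw [hv, FracLT]; omega)).count_reduce
  have hSent := Sent_eq_log_add_countEntropy hlen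
  rw [hv] at h₂ h₃ hSent
  have h₃' : ((reduce (Dseq w)).count 3 : ℝ) = q - 2 * p := eq_sub_of_add_eq (mod_cast h₃)
  rw [Hent_eq_Sent_sub hv hq₀ hpq.le, hSent, countEntropy_degSeq, degSeq, h₂, h₃',
    negMulLog_div, negMulLog_div]
  simp only [negMulLog]
  field_simp
  ring

/-- The Farey word `L^(m+2) R u`: the first `R` leads into the interval from `1/(m+3)` to
`1/(m+2)`, which `u` then subdivides. -/
def turnWord (m : ℕ) (u : List LR) : List LR :=
  LR.L :: LR.L :: (List.replicate m LR.L ++ LR.R :: u)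

theorem isFareyWord_turnWord (m : ℕ) (u : List LR) : IsFareyWord (turnWord m u) := rfl

theorem foldl_fareyStep_replicate_L (m a b c d : ℕ) :
    (List.replicate m LR.L).foldl fareyStep ((a, b), (c, d)) =
      ((a, b), (m * a + c, m * b + d)) := by
  induction m generalizing c d with
  | zero => simp
  | succ m ih =>
    rw [List.replicate_succ, List.foldl_cons, fareyStep, ih]
    congr 2 <;> ring

theorem foldl_degStep_replicate_L (m y : ℕ) (I : List ℕ) :
    (List.replicate m LR.L).foldl degStep ([1, 1], 2 :: (I ++ [y])) =
      ([1, 1], 2 :: ((List.replicate m 3 ++ I) ++ [y + m])) := by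
  induction m generalizing y I with
  | zero => rfl
  | succ m ih =>
    rw [List.replicate_succ, List.foldl_cons, degStep, oplus_one_one, ih, List.replicate_succ',
      add_right_comm, add_assoc y, List.append_assoc _ [3], List.singleton_append]

theorem finalPair_turnWord (m : ℕ) (u : List LR) :
    finalPair (turnWord m u) = u.foldl fareyStep ((1, m + 3), (1, m + 2)) := by
  have hL := foldl_fareyStep_replicate_L m 0 1 1 2
  simp only [mul_zero, mul_one, zero_add] at hL
  simp [finalPair, turnWord, fareyStep, hL, add_comm, ← add_assoc]

theorem degPair_turnWord (m : ℕ) (u : List LR) :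
    degPair (turnWord m u) = u.foldl degStep
      (2 :: ((List.replicate (m + 1) 3 ++ [2]) ++ [m + 3]),
        2 :: ((List.replicate m 3 ++ [2]) ++ [m + 2])) := by
  have hhalf : oplus [1, 1] [1, 1] = 2 :: ([2] ++ [2]) := rfl
  rw [degPair, turnWord, List.tail_cons, List.foldl_cons, List.foldl_append, degStep, hhalf,
    foldl_degStep_replicate_L, List.foldl_cons, degStep, oplus_one_one, add_comm 2 m]
  rfl

theorem value_turnWord_nil (m : ℕ) : value (turnWord m []) = (2, 2 * (m + 2) + 1) := by
  rw [value, finalPair_turnWord]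
  simp only [List.foldl_nil, Prod.mk.injEq, true_and]
  ring

theorem value_turnWord_L (m : ℕ) : value (turnWord m [LR.L]) = (3, 3 * (m + 2) + 2) := by
  rw [value, finalPair_turnWord]
  simp only [List.foldl_cons, List.foldl_nil, fareyStep, Prod.mk.injEq, true_and]
  ring

theorem value_turnWord_R (m : ℕ) : value (turnWord m [LR.R]) = (3, 3 * (m + 2) + 1) := by
  rw [value, finalPair_turnWord]
  simp only [List.foldl_cons, List.foldl_nil, fareyStep, Prod.mk.injEq, true_and]
  ring

theorem hubDegrees_turnWord_nil (m : ℕ) : hubDegrees (turnWord m []) = [m + 5, m + 6] := by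
  have hboundary : 2 + 1 + (m + 2 + 1) = m + 6 := by omega
  rw [hubDegrees, degSeq, Dseq, degPair_turnWord, List.foldl_nil, oplus_cons_concat,
    reduce_cons_concat, hboundary]
  simp

theorem hubDegrees_turnWord_L (m : ℕ) :
    hubDegrees (turnWord m [LR.L]) = [m + 6, m + 5, m + 7] := by
  have hboundary : 2 + 1 + (m + 2 + 1 + 1) = m + 7 := by omega
  rw [hubDegrees, degSeq, Dseq, degPair_turnWord, List.foldl_cons, List.foldl_nil, degStep,
    oplus_cons_concat, oplus_cons_concat, reduce_cons_concat, hboundary]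
  simp

theorem hubDegrees_turnWord_R (m : ℕ) :
    hubDegrees (turnWord m [LR.R]) = [m + 5, m + 5, m + 7] := by
  have hboundary : 2 + 1 + 1 + (m + 2 + 1) = m + 7 := by omega
  rw [hubDegrees, degSeq, Dseq, degPair_turnWord, List.foldl_cons, List.foldl_nil, degStep,
    oplus_cons_concat, oplus_cons_concat, reduce_cons_concat, hboundary]
  simp

theorem countEntropy_hubDegrees_turnWord_R (m : ℕ) :
    countEntropy (hubDegrees (turnWord m [LR.R])) = -(2 * log 2) := by
  have hcount : [m + 5, m + 5, m + 7].count (m + 5) = 2 := by simp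
  have hfilter : [m + 5, m + 5, m + 7].filter (· ≠ m + 5) = [m + 7] := by simp
  rw [hubDegrees_turnWord_R, countEntropy_eq_add_filter_ne _ (m + 5), hcount, hfilter,
    countEntropy_eq_zero_of_nodup (List.nodup_singleton _), add_zero, negMulLog,
    Nat.cast_ofNat, neg_mul]

/-- for every integer n ≥ 2 the reduced entropies of the Haros graphs of
the rational families 2/(2n+1), 3/(3n+2), 3/(3n+1) satisfy
H(2/(2n+1)) = (2/(2n+1))·ln 2, H(3/(3n+2)) = (3/(3n+2))·ln 3 and
H(3/(3n+1)) = (3/(3n+1))·(ln 3 − (2/3)·ln 2); each family lies on a line H(x) = a·x. -/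
theorem statement16 (n : ℕ) (hn : 2 ≤ n)
    (w1 w2 w3 : List LR)
    (hw1 : IsFareyWord w1) (hw2 : IsFareyWord w2) (hw3 : IsFareyWord w3)
    (hv1 : value w1 = (2, 2 * n + 1)) (hv2 : value w2 = (3, 3 * n + 2))
    (hv3 : value w3 = (3, 3 * n + 1)) :
    Hent w1 = (2 / (2 * (n : ℝ) + 1)) * Real.log 2 ∧
    Hent w2 = (3 / (3 * (n : ℝ) + 2)) * Real.log 3 ∧
    Hent w3 = (3 / (3 * (n : ℝ) + 1)) * (Real.log 3 - (2 / 3) * Real.log 2) := by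
  obtain ⟨m, rfl⟩ := Nat.exists_eq_add_of_le' hn
  have hw1_eq : w1 = turnWord m [] :=
    hw1.eq_of_value_eq (isFareyWord_turnWord m _) (hv1.trans (value_turnWord_nil m).symm)
  have hw2_eq : w2 = turnWord m [LR.L] :=
    hw2.eq_of_value_eq (isFareyWord_turnWord m _) (hv2.trans (value_turnWord_L m).symm)
  have hw3_eq : w3 = turnWord m [LR.R] :=
    hw3.eq_of_value_eq (isFareyWord_turnWord m _) (hv3.trans (value_turnWord_R m).symm)
  have hhubs1 : countEntropy (hubDegrees w1) = 0 :=
    countEntropy_eq_zero_of_nodup (by simp [hw1_eq, hubDegrees_turnWord_nil])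
  have hhubs2 : countEntropy (hubDegrees w2) = 0 :=
    countEntropy_eq_zero_of_nodup (by simp [hw2_eq, hubDegrees_turnWord_L])
  have hhubs3 : countEntropy (hubDegrees w3) = -(2 * Real.log 2) :=
    hw3_eq ▸ countEntropy_hubDegrees_turnWord_R m
  rw [Hent_of_value_lt_half hw1 hv1 (by omega), Hent_of_value_lt_half hw2 hv2 (by omega),
    Hent_of_value_lt_half hw3 hv3 (by omega), hhubs1, hhubs2, hhubs3]
  push_cast
  exact ⟨by ring, by ring, by ring⟩
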